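/- Let 1 ≤ p < ∞ and for each n ∈ ℕ let X^{(n)} be a random vector in B_p^n with directional distribution C_{n,p}, and set R_n = (∏_{i=1}^n |X_i^{(n)}|)^{1/n} / ((1/n) ∑_{i=1}^n |X_i^{(n)}|^p)^{1/p}. Then for every θ ∈ (e^{m_p}, 1), lim_{n→∞} (1/n) log P(R_n > θ) = −I_p(θ). -/

import Mathlib

open MeasureTheory ProbabilityTheory Filter Set

noncomputable section

/-- The `ℓ_p`-norm on `ℝ^n`: `‖x‖_p = (∑ |x_i|^p)^{1/p}`. -/
def pNorm (p : ℝ) {n : ℕ} (x : Fin n → ℝ) : ℝ := (∑ i, |x i| ^ p) ^ (1 / p)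

/-- The unit ball `B_p^n = {x : ‖x‖_p ≤ 1}`. -/
def unitBallp (n : ℕ) (p : ℝ) : Set (Fin n → ℝ) := {x | pNorm p x ≤ 1}

/-- The unit sphere `S_p^{n-1} = {x : ‖x‖_p = 1}`. -/
def unitSpherep (n : ℕ) (p : ℝ) : Set (Fin n → ℝ) := {x | pNorm p x = 1}

/-- The cone spanned by a set: `{r x : r ∈ [0,1], x ∈ A}`. -/
def coneOf {n : ℕ} (A : Set (Fin n → ℝ)) : Set (Fin n → ℝ) :=
  {y | ∃ r ∈ Icc (0:ℝ) 1, ∃ x ∈ A, y = r • x}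

/-- `C` is the cone probability measure `C_{n,p}` on `S_p^{n-1}`: the probability measure
concentrated on the sphere with `C(A) = vol_n({r x : r ∈ [0,1], x ∈ A})/vol_n(B_p^n)` for
measurable `A ⊆ S_p^{n-1}`. -/
def IsConeMeasure (n : ℕ) (p : ℝ) (C : Measure (Fin n → ℝ)) : Prop :=
  IsProbabilityMeasure C ∧ C (unitSpherep n p)ᶜ = 0 ∧
    ∀ A : Set (Fin n → ℝ), MeasurableSet A → A ⊆ unitSpherep n p →
      C A = volume (coneOf A) / volume (unitBallp n p)

/-- A random vector `X` (on the probability space `(Ω, P)`) has directional distribution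
`C_{n,p}`: it equals in distribution `R • Z`, where `Z ∼ C_{n,p}` and `R` is an independent
random variable with values in `[0,1]` whose law has no atom at `0`.  Independence of `R`
and `Z` is encoded by taking the joint law to be the product measure `μ_R ⊗ C_{n,p}`. -/
def HasConeDirDist (n : ℕ) (p : ℝ) {Ω : Type*} [MeasurableSpace Ω] (P : Measure Ω)
    (X : Ω → Fin n → ℝ) : Prop :=
  ∃ (μR : Measure ℝ) (C : Measure (Fin n → ℝ)),
    IsProbabilityMeasure μR ∧ μR (Icc (0:ℝ) 1)ᶜ = 0 ∧ μR {0} = 0 ∧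
    IsConeMeasure n p C ∧
    Measure.map X P = Measure.map (fun rz : ℝ × (Fin n → ℝ) => rz.1 • rz.2) (μR.prod C)

/-- The digamma function `ψ = Γ'/Γ`. -/
def digammaFn (x : ℝ) : ℝ := deriv Real.Gamma x / Real.Gamma x

/-- `H(x) = ψ(x) - log x`. -/
def Hfun (x : ℝ) : ℝ := digammaFn x - Real.log x

/-- The inverse `H⁻¹` of the increasing bijection `H : (0,∞) → (-∞,0)`. -/
def Hinv (y : ℝ) : ℝ := Function.invFunOn Hfun (Ioi 0) y

/-- The constant `m_p = (1/p)(ψ(1/p) + log p)`. -/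
def mConst (p : ℝ) : ℝ := (1/p) * (digammaFn (1/p) + Real.log p)

/-- `G_p(θ) = H⁻¹(p log θ)`. -/
def Gfun (p θ : ℝ) : ℝ := Hinv (p * Real.log θ)

/-- The rate function
`I_p(θ) = [p G_p(θ) - 1] log θ + G_p(θ)[log G_p(θ) - 1] - log Γ(G_p(θ))
            + (1/p)(1 + log p) + log Γ(1/p)`. -/
def ratefn (p θ : ℝ) : ℝ :=
  (p * Gfun p θ - 1) * Real.log θ + Gfun p θ * (Real.log (Gfun p θ) - 1)
    - Real.log (Real.Gamma (Gfun p θ)) + (1/p) * (1 + Real.log p)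
    + Real.log (Real.Gamma (1/p))

/-- The ratio of the two sides of the `p`-generalized AGM inequality:
`R_n = (∏ |x_i|)^{1/n} / ((1/n) ∑ |x_i|^p)^{1/p}`. -/
def ratioAGM (p : ℝ) {n : ℕ} (x : Fin n → ℝ) : ℝ :=
  (∏ i, |x i|) ^ ((1:ℝ)/n) / ((1/(n:ℝ)) * ∑ i, |x i| ^ p) ^ (1/p)

section Digamma

lemma hasDerivAt_log_Gamma {x : ℝ} (hx : 0 < x) :
    HasDerivAt (fun y => Real.log (Real.Gamma y)) (digammaFn x) x := by
  have h : DifferentiableAt ℝ Real.Gamma x :=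
    Real.differentiableAt_Gamma fun m => by
      have : (0 : ℝ) ≤ m := m.cast_nonneg
      intro h; linarith
  exact h.hasDerivAt.log (Real.Gamma_pos_of_pos hx).ne'

lemma log_Gamma_add_one {x : ℝ} (hx : 0 < x) :
    Real.log (Real.Gamma (x + 1)) = Real.log (Real.Gamma x) + Real.log x := by
  rw [Real.Gamma_add_one hx.ne', Real.log_mul hx.ne' (Real.Gamma_pos_of_pos hx).ne', add_comm]

lemma digammaFn_add_one {x : ℝ} (hx : 0 < x) : digammaFn (x + 1) = digammaFn x + x⁻¹ := by
  have h1 : HasDerivAt (fun y => Real.log (Real.Gamma (y + 1))) (digammaFn (x + 1)) x :=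
    (hasDerivAt_log_Gamma (by linarith : 0 < x + 1)).comp_add_const x 1
  have h2 := (hasDerivAt_log_Gamma hx).add (Real.hasDerivAt_log hx.ne')
  refine h1.unique (h2.congr_of_eventuallyEq ?_)
  filter_upwards [lt_mem_nhds hx] with y hy using log_Gamma_add_one hy

lemma digammaFn_le_log {x : ℝ} (hx : 0 < x) : digammaFn x ≤ Real.log x := by
  have h := Real.convexOn_log_Gamma.le_slope_of_hasDerivAt (x := x) (y := x + 1)
    hx (by simp; linarith) (by linarith) (hasDerivAt_log_Gamma hx)
  simpa [slope_def_field, log_Gamma_add_one hx] using h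

lemma log_le_digammaFn_add_one {x : ℝ} (hx : 0 < x) : Real.log x ≤ digammaFn (x + 1) := by
  have h := Real.convexOn_log_Gamma.slope_le_of_hasDerivAt (x := x) (y := x + 1)
    hx (by simp; linarith) (by linarith) (hasDerivAt_log_Gamma (by linarith : 0 < x + 1))
  simpa [slope_def_field, log_Gamma_add_one hx] using h

lemma Hfun_nonpos {x : ℝ} (hx : 0 < x) : Hfun x ≤ 0 :=
  sub_nonpos.2 (digammaFn_le_log hx)

lemma neg_inv_le_Hfun {x : ℝ} (hx : 0 < x) : -x⁻¹ ≤ Hfun x := by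
  have h1 := log_le_digammaFn_add_one hx
  rw [digammaFn_add_one hx] at h1
  unfold Hfun
  linarith

lemma tendsto_Hfun_atTop : Tendsto Hfun atTop (nhds 0) := by
  refine tendsto_of_tendsto_of_tendsto_of_le_of_le' (g := fun x : ℝ => -x⁻¹) (h := fun _ => 0)
    (by simpa using (tendsto_inv_atTop_zero (𝕜 := ℝ)).neg) tendsto_const_nhds ?_ ?_
  · filter_upwards [eventually_gt_atTop 0] with x hx using neg_inv_le_Hfun hx
  · filter_upwards [eventually_gt_atTop 0] with x hx using Hfun_nonpos hx

/-- The increment `H (x + 1) - H x` as a function of `x`. -/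
def Hincr (x : ℝ) : ℝ := x⁻¹ - (Real.log (x + 1) - Real.log x)

lemma Hfun_add_one {x : ℝ} (hx : 0 < x) : Hfun (x + 1) = Hfun x + Hincr x := by
  unfold Hfun Hincr
  rw [digammaFn_add_one hx]
  ring

lemma Hincr_strictAntiOn : StrictAntiOn Hincr (Ioi 0) := by
  have hd : ∀ x : ℝ, 0 < x →
      HasDerivAt Hincr (-(x ^ 2)⁻¹ - ((x + 1)⁻¹ - x⁻¹)) x := by
    intro x hx
    exact (hasDerivAt_inv hx.ne').sub
      (((Real.hasDerivAt_log (by linarith : x + 1 ≠ 0)).comp_add_const x 1).sub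
        (Real.hasDerivAt_log hx.ne'))
  refine strictAntiOn_of_deriv_neg (convex_Ioi 0)
    (fun x hx => (hd x hx).continuousAt.continuousWithinAt) ?_
  intro x hx
  rw [interior_Ioi] at hx
  have hx : 0 < x := hx
  rw [(hd x hx).deriv]
  have : -(x ^ 2)⁻¹ - ((x + 1)⁻¹ - x⁻¹) = -(1 / (x ^ 2 * (x + 1))) := by
    field_simp
    ring
  rw [this]
  have : 0 < 1 / (x ^ 2 * (x + 1)) := by positivity
  linarith

lemma Hfun_strictMonoOn : StrictMonoOn Hfun (Ioi 0) := by
  intro x hx y hy hxy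
  have hx : 0 < x := hx
  have hy : 0 < y := hy
  have key : ∀ N : ℕ, Hfun (y + N + 1) - Hfun (x + N + 1) + (Hincr x - Hincr y)
      ≤ Hfun y - Hfun x := by
    intro N
    induction N with
    | zero =>
      simp only [Nat.cast_zero, add_zero]
      rw [Hfun_add_one hx, Hfun_add_one hy]
      linarith
    | succ k ih =>
      have hk : (0 : ℝ) ≤ k := k.cast_nonneg
      have h1 := Hfun_add_one (by linarith : 0 < x + k + 1)
      have h2 := Hfun_add_one (by linarith : 0 < y + k + 1)
      have h3 := Hincr_strictAntiOn (by simp; linarith : x + k + 1 ∈ Ioi (0 : ℝ))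
        (by simp; linarith : y + k + 1 ∈ Ioi (0 : ℝ)) (by linarith)
      push_cast
      rw [← add_assoc, ← add_assoc, h1, h2]
      linarith
  have hlim : ∀ z : ℝ, Tendsto (fun N : ℕ => Hfun (z + N + 1)) atTop (nhds 0) := fun z =>
    tendsto_Hfun_atTop.comp
      (tendsto_atTop_add_const_right _ _
        (tendsto_atTop_add_const_left _ _ tendsto_natCast_atTop_atTop))
  have h := le_of_tendsto' (((hlim y).sub (hlim x)).add_const (Hincr x - Hincr y)) key
  have := Hincr_strictAntiOn hx hy hxy
  linarith

lemma continuousOn_digammaFn : ContinuousOn digammaFn (Ioi 0) := by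
  have hre : IsOpen {z : ℂ | 0 < z.re} := isOpen_lt continuous_const Complex.continuous_re
  have hdiff : DifferentiableOn ℂ Complex.Gamma {z : ℂ | 0 < z.re} := fun z hz =>
    (Complex.differentiableAt_Gamma z fun m h => by
      have : z.re = -(m : ℝ) := by simp [h]
      have hm : (0 : ℝ) ≤ m := m.cast_nonneg
      have hz : 0 < z.re := hz
      linarith).differentiableWithinAt
  have hcont : ContinuousOn (fun x : ℝ => (deriv Complex.Gamma x).re) (Ioi 0) :=
    Complex.continuous_re.comp_continuousOn
      ((hdiff.deriv hre).continuousOn.comp Complex.continuous_ofReal.continuousOn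
        fun x hx => by simpa using hx)
  have hderiv : ∀ x ∈ Ioi (0 : ℝ), deriv Real.Gamma x = (deriv Complex.Gamma x).re := by
    intro x hx
    have h1 : DifferentiableAt ℂ Complex.Gamma x :=
      hdiff.differentiableAt (hre.mem_nhds (by simpa using hx))
    exact h1.hasDerivAt.real_of_complex.deriv
  exact (hcont.congr hderiv).div Real.differentiableOn_Gamma_Ioi.continuousOn
    fun x hx => (Real.Gamma_pos_of_pos hx).ne'

lemma continuousOn_Hfun : ContinuousOn Hfun (Ioi 0) :=
  continuousOn_digammaFn.sub (Real.continuousOn_log.mono fun _ hx => ne_of_gt hx)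

/-- Values in `(H a, 0)` are attained by `H` at the point chosen by `Hinv`, which lies beyond `a`. -/
lemma Hinv_spec {a t : ℝ} (ha : 0 < a) (hat : Hfun a < t) (ht : t < 0) :
    a < Hinv t ∧ Hfun (Hinv t) = t := by
  obtain ⟨b, hb, hab⟩ :=
    ((tendsto_Hfun_atTop.eventually (lt_mem_nhds ht)).and (eventually_gt_atTop a)).exists
  obtain ⟨c, hc, hct⟩ := intermediate_value_Icc hab.le
    (continuousOn_Hfun.mono fun x hx => ha.trans_le hx.1) ⟨hat.le, hb.le⟩
  have hex : ∃ x ∈ Ioi (0 : ℝ), Hfun x = t := ⟨c, ha.trans_le hc.1, hct⟩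
  have hpos : Hinv t ∈ Ioi (0 : ℝ) := Function.invFunOn_mem hex
  have heq : Hfun (Hinv t) = t := Function.invFunOn_eq hex
  exact ⟨(Hfun_strictMonoOn.lt_iff_lt ha hpos).1 (by rwa [heq]), heq⟩

/-- The defect `x log x - x - log Γ(x)` in the leading-order Stirling formula. -/
def stirlingDefect (x : ℝ) : ℝ := x * Real.log x - x - Real.log (Real.Gamma x)

lemma hasDerivAt_stirlingDefect {x : ℝ} (hx : 0 < x) :
    HasDerivAt stirlingDefect (-Hfun x) x := by
  have h := ((Real.hasDerivAt_mul_log hx.ne').sub (hasDerivAt_id x)).sub (hasDerivAt_log_Gamma hx)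
  refine h.congr_deriv ?_
  unfold Hfun
  ring

lemma tendsto_stirlingDefect_div_atTop :
    Tendsto (fun x => stirlingDefect x / x) atTop (nhds 0) := by
  rw [Metric.tendsto_atTop]
  intro ε hε
  obtain ⟨a, ha0, ha⟩ : ∃ a : ℝ, 0 < a ∧ ∀ x ≥ a, |Hfun x| < ε / 2 := by
    obtain ⟨N, hN⟩ := (Metric.tendsto_atTop.1 tendsto_Hfun_atTop) (ε / 2) (by linarith)
    refine ⟨max N 1, by positivity, fun x hx => ?_⟩
    simpa using hN x ((le_max_left _ _).trans hx)
  refine ⟨max a (2 * |stirlingDefect a| / ε + 1), fun x hx => ?_⟩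
  have hax : a ≤ x := (le_max_left _ _).trans hx
  have hx0 : 0 < x := ha0.trans_le hax
  have hbound : ‖stirlingDefect x - stirlingDefect a‖ ≤ ε / 2 * ‖x - a‖ :=
    (convex_Ici a).norm_image_sub_le_of_norm_hasDerivWithin_le
      (fun y hy => (hasDerivAt_stirlingDefect (ha0.trans_le hy)).hasDerivWithinAt)
      (fun y hy => by simpa using (ha y hy).le) self_mem_Ici hax
  rw [Real.norm_eq_abs, Real.norm_eq_abs, abs_of_nonneg (sub_nonneg.2 hax)] at hbound
  have h2 : 2 * |stirlingDefect a| / ε < x := by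
    have := (le_max_right _ _).trans hx
    linarith
  rw [div_lt_iff₀ hε] at h2
  rw [Real.dist_eq, sub_zero, abs_div, abs_of_pos hx0, div_lt_iff₀ hx0]
  have h3 := abs_sub_abs_le_abs_sub (stirlingDefect x) (stirlingDefect a)
  nlinarith

end Digamma
section LargeDeviations

lemma rpow_le_tilted_sum {θ θ₂ r : ℝ} {m s δ : ℝ} (hθ : 0 < θ) (hθ₂ : 0 < θ₂) (hr : 0 ≤ r)
    (hm : 0 < m) (hδ : 0 < δ) (hδs : δ < s) :
    r ^ (m * s) ≤ θ ^ (m * δ) * r ^ (m * (s - δ)) + θ₂ ^ (-(m * δ)) * r ^ (m * (s + δ))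
      + θ₂ ^ (m * s) * (if θ < r then 1 else 0) := by
  have hs : 0 < s := hδ.trans hδs
  rcases hr.eq_or_lt with rfl | hr
  · rw [Real.zero_rpow (by positivity)]
    positivity
  have hind : (0 : ℝ) ≤ if θ < r then 1 else 0 := by positivity
  rcases le_or_gt r θ with h | h
  · have h1 : r ^ (m * s) = r ^ (m * δ) * r ^ (m * (s - δ)) := by
      rw [← Real.rpow_add hr]; ring_nf
    have h2 : r ^ (m * δ) ≤ θ ^ (m * δ) := Real.rpow_le_rpow hr.le h (by positivity)
    have h3 := mul_le_mul_of_nonneg_right h2 (Real.rpow_nonneg hr.le (m * (s - δ)))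
    have h4 : 0 ≤ θ₂ ^ (-(m * δ)) * r ^ (m * (s + δ)) := by positivity
    have h5 : 0 ≤ θ₂ ^ (m * s) * (if θ < r then 1 else 0) := by positivity
    linarith
  · have h4 : 0 ≤ θ ^ (m * δ) * r ^ (m * (s - δ)) := by positivity
    rw [if_pos h, mul_one]
    rcases le_or_gt r θ₂ with h' | h'
    · have h5 : 0 ≤ θ₂ ^ (-(m * δ)) * r ^ (m * (s + δ)) := by positivity
      have h6 : r ^ (m * s) ≤ θ₂ ^ (m * s) := Real.rpow_le_rpow hr.le h' (by positivity)
      linarith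
    · have h1 : r ^ (m * s) = r ^ (-(m * δ)) * r ^ (m * (s + δ)) := by
        rw [← Real.rpow_add hr]; ring_nf
      have h2 : r ^ (-(m * δ)) ≤ θ₂ ^ (-(m * δ)) :=
        Real.rpow_le_rpow_of_nonpos hθ₂ h'.le (by simp; positivity)
      have h3 := mul_le_mul_of_nonneg_right h2 (Real.rpow_nonneg hr.le (m * (s + δ)))
      have h5 : 0 ≤ θ₂ ^ (m * s) := by positivity
      linarith

variable {α : Type*} [MeasurableSpace α]

lemma lintegral_ofReal_const_mul (Q : Measure α) {c : ℝ} (hc : 0 ≤ c) (f : α → ℝ) :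
    ∫⁻ x, ENNReal.ofReal (c * f x) ∂Q = ENNReal.ofReal c * ∫⁻ x, ENNReal.ofReal (f x) ∂Q := by
  simp_rw [ENNReal.ofReal_mul hc]
  exact lintegral_const_mul' _ _ ENNReal.ofReal_ne_top

/-- Markov's inequality for the power moment of exponent `m * s`. -/
lemma toReal_measure_gt_le_exp (Q : Measure α) {R : α → ℝ} {θ m s l : ℝ}
    (hθ : 0 < θ) (hms : 0 < m * s)
    (hmom : ∫⁻ x, ENNReal.ofReal (R x ^ (m * s)) ∂Q = ENNReal.ofReal (Real.exp (m * l)))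
    (hR : Measurable R) :
    (Q {x | R x > θ}).toReal ≤ Real.exp (m * (l - s * Real.log θ)) := by
  have h1 : ENNReal.ofReal (θ ^ (m * s)) * Q {x | R x > θ}
      ≤ ENNReal.ofReal (Real.exp (m * l)) := by
    rw [← hmom]
    refine le_trans (mul_le_mul_right (measure_mono ?_) _)
      (mul_meas_ge_le_lintegral (hR.pow_const _).ennreal_ofReal (ENNReal.ofReal (θ ^ (m * s))))
    intro x hx
    exact ENNReal.ofReal_le_ofReal (Real.rpow_le_rpow hθ.le (le_of_lt hx) hms.le)
  have h2 := ENNReal.toReal_mono ENNReal.ofReal_ne_top h1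
  rw [ENNReal.toReal_mul, ENNReal.toReal_ofReal (by positivity),
    ENNReal.toReal_ofReal (by positivity)] at h2
  have h3 : Real.exp (m * (l - s * Real.log θ)) = Real.exp (m * l) / θ ^ (m * s) := by
    rw [Real.rpow_def_of_pos hθ, ← Real.exp_sub]
    ring_nf
  rw [h3, le_div_iff₀ (by positivity), mul_comm]
  exact h2

lemma exp_moment_le_tilted_sum (Q : Measure α) [IsProbabilityMeasure Q] {R : α → ℝ}
    (hR : Measurable R) (hR0 : ∀ x, 0 ≤ R x) {m s δ c θ : ℝ} (L : ℝ → ℝ)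
    (hθ : 0 < θ) (hm : 0 < m) (hδ : 0 < δ) (hδs : δ < s)
    (hmom : ∀ u, 0 < u →
      ∫⁻ x, ENNReal.ofReal (R x ^ (m * u)) ∂Q = ENNReal.ofReal (Real.exp (m * L u))) :
    Real.exp (m * L s) ≤ Real.exp (m * (δ * Real.log θ + L (s - δ)))
      + Real.exp (m * (-(δ * c) + L (s + δ)))
      + Real.exp (m * (s * c)) * (Q {x | R x > θ}).toReal := by
  have hE : ∀ u v : ℝ, Real.exp u ^ v = Real.exp (u * v) := fun u v => (Real.exp_mul u v).symm
  have hset : MeasurableSet {x | R x > θ} := measurableSet_lt measurable_const hR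
  have hle : ∫⁻ x, ENNReal.ofReal (R x ^ (m * s)) ∂Q ≤
      ∫⁻ x, (ENNReal.ofReal (θ ^ (m * δ) * R x ^ (m * (s - δ)))
        + ENNReal.ofReal (Real.exp c ^ (-(m * δ)) * R x ^ (m * (s + δ)))
        + ENNReal.ofReal (Real.exp c ^ (m * s)) * {x | R x > θ}.indicator 1 x) ∂Q := by
    refine lintegral_mono fun x => ?_
    refine (ENNReal.ofReal_le_ofReal (rpow_le_tilted_sum hθ (Real.exp_pos c) (hR0 x) hm hδ
      hδs)).trans ?_
    refine ENNReal.ofReal_add_le.trans (add_le_add ENNReal.ofReal_add_le ?_)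
    rw [ENNReal.ofReal_mul (by positivity)]
    refine mul_le_mul_right ?_ _
    by_cases h : θ < R x <;> simp [h]
  have hm1 : Measurable fun x => ENNReal.ofReal (θ ^ (m * δ) * R x ^ (m * (s - δ))) :=
    ((hR.pow_const _).const_mul _).ennreal_ofReal
  have hm2 : Measurable fun x => ENNReal.ofReal (Real.exp c ^ (-(m * δ)) * R x ^ (m * (s + δ))) :=
    ((hR.pow_const _).const_mul _).ennreal_ofReal
  rw [lintegral_add_left (f := fun x => _ + _) (hm1.add hm2), lintegral_add_left hm1,
    lintegral_ofReal_const_mul _ (by positivity), lintegral_ofReal_const_mul _ (by positivity),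
    lintegral_const_mul' _ _ ENNReal.ofReal_ne_top, lintegral_indicator_one hset,
    hmom s (hδ.trans hδs), hmom (s - δ) (by linarith), hmom (s + δ) (by linarith)] at hle
  have hq : Q {x | R x > θ} ≠ ⊤ := measure_ne_top _ _
  rw [← ENNReal.ofReal_toReal hq, ← ENNReal.ofReal_mul (by positivity),
    ← ENNReal.ofReal_mul (by positivity), ← ENNReal.ofReal_mul (by positivity),
    ← ENNReal.ofReal_add (by positivity) (by positivity),
    ← ENNReal.ofReal_add (by positivity) (by positivity),
    ENNReal.ofReal_le_ofReal_iff (by positivity)] at hle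
  refine hle.trans_eq ?_
  rw [Real.rpow_def_of_pos hθ, hE, hE, ← Real.exp_add, ← Real.exp_add]
  ring_nf

/-- Half of the mass of a moment survives when two exponentially smaller pieces are removed. -/
lemma eventually_exp_le_quarter {u v : ℕ → ℝ} {a b : ℝ} (hu : Tendsto u atTop (nhds a))
    (hv : Tendsto v atTop (nhds b)) (hab : a < b) :
    ∀ᶠ n : ℕ in atTop, Real.exp (n * u n) ≤ Real.exp (n * v n) / 4 := by
  have h1 : Tendsto (fun n : ℕ => (n : ℝ) * (u n - v n)) atTop atBot :=
    tendsto_natCast_atTop_atTop.atTop_mul_neg (sub_neg.2 hab) (hu.sub hv)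
  filter_upwards [(Real.tendsto_exp_atBot.comp h1).eventually
    (gt_mem_nhds (by norm_num : (0 : ℝ) < 1 / 4))] with n hn
  have h2 : Real.exp (n * u n) = Real.exp (n * (u n - v n)) * Real.exp (n * v n) := by
    rw [← Real.exp_add]; ring_nf
  rw [h2]
  have := mul_le_mul_of_nonneg_right (le_of_lt hn) (Real.exp_pos (n * v n)).le
  simp only [Function.comp_apply] at this
  linarith

lemma exists_small_step_lt {Λ : ℝ → ℝ} {D s b c : ℝ} (hΛ : HasDerivAt Λ D s) (hs : 0 < s)
    (hb : b < D) (hc : D < c) :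
    ∃ δ, 0 < δ ∧ δ < s ∧ δ * b + Λ (s - δ) < Λ s ∧ -(δ * c) + Λ (s + δ) < Λ s := by
  have hslope := hasDerivAt_iff_tendsto_slope_zero.1 hΛ
  have hpos : Tendsto (fun δ : ℝ => δ) (nhdsWithin 0 (Ioi 0)) (nhdsWithin 0 {0}ᶜ) :=
    tendsto_id.mono_right (nhdsWithin_mono _ fun x hx => ne_of_gt hx)
  have hneg : Tendsto (fun δ : ℝ => -δ) (nhdsWithin 0 (Ioi 0)) (nhdsWithin 0 {0}ᶜ) := by
    refine tendsto_nhdsWithin_iff.2 ⟨?_, ?_⟩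
    · have : Tendsto (fun δ : ℝ => -δ) (nhds 0) (nhds 0) := by
        simpa using (continuous_neg (G := ℝ)).tendsto 0
      exact this.mono_left nhdsWithin_le_nhds
    · filter_upwards [self_mem_nhdsWithin] with x hx
      simpa using ne_of_gt hx
  obtain ⟨δ, h1, h2, h3, h4⟩ := (((hslope.comp hpos).eventually (gt_mem_nhds hc)).and
    (((hslope.comp hneg).eventually (lt_mem_nhds hb)).and
      (eventually_mem_nhdsWithin.and
        ((gt_mem_nhds hs).filter_mono nhdsWithin_le_nhds)))).exists
  have h3 : 0 < δ := h3
  simp only [Function.comp_apply, smul_eq_mul] at h1 h2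
  refine ⟨δ, h3, h4, ?_, ?_⟩
  · rw [inv_neg, neg_mul, ← mul_neg, lt_inv_mul_iff₀ h3, ← sub_eq_add_neg] at h2
    linarith
  · rw [inv_mul_lt_iff₀ h3] at h1
    linarith

/-- One-dimensional Gärtner–Ellis theorem for upper tails, in terms of power moments of
nonnegative random variables. -/
theorem tendsto_log_tail_of_moments {α : ℕ → Type*} [∀ n, MeasurableSpace (α n)]
    (Q : ∀ n, Measure (α n)) (R : ∀ n, α n → ℝ) (L : ℕ → ℝ → ℝ) {Λ D : ℝ → ℝ} {θ s₀ : ℝ}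
    (hQ : ∀ n, 1 ≤ n → IsProbabilityMeasure (Q n))
    (hR : ∀ n, Measurable (R n)) (hR0 : ∀ n x, 0 ≤ R n x)
    (hmom : ∀ n, 1 ≤ n → ∀ s : ℝ, 0 < s →
      ∫⁻ x, ENNReal.ofReal (R n x ^ (n * s)) ∂(Q n) = ENNReal.ofReal (Real.exp (n * L n s)))
    (hL : ∀ s, 0 < s → Tendsto (fun n => L n s) atTop (nhds (Λ s)))
    (hΛ : ∀ s, 0 < s → HasDerivAt Λ (D s) s) (hs₀ : 0 < s₀) (hD : ContinuousAt D s₀)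
    (hD₀ : D s₀ = Real.log θ) (hmono : ∀ s, s₀ < s → D s₀ < D s) (hθ : 0 < θ) :
    Tendsto (fun n : ℕ => (n : ℝ)⁻¹ * Real.log ((Q n {x | R n x > θ}).toReal)) atTop
      (nhds (Λ s₀ - s₀ * Real.log θ)) := by
  have lower : ∀ s c, s₀ < s → D s < c → ∀ᶠ n : ℕ in atTop,
      Real.exp (n * L n s) / 2 ≤ Real.exp (n * (s * c)) * (Q n {x | R n x > θ}).toReal := by
    intro s c hs hc
    have hs' : 0 < s := hs₀.trans hs
    obtain ⟨δ, hδ, hδs, h1, h2⟩ :=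
      exists_small_step_lt (hΛ s hs') hs' (hD₀ ▸ hmono s hs : Real.log θ < D s) hc
    have e1 := eventually_exp_le_quarter
      (tendsto_const_nhds.add (hL (s - δ) (by linarith))) (hL s hs') h1
    have e2 := eventually_exp_le_quarter
      (tendsto_const_nhds.add (hL (s + δ) (by linarith))) (hL s hs') h2
    filter_upwards [e1, e2, eventually_ge_atTop 1] with n h1 h2 hn
    have := hQ n hn
    have h3 := exp_moment_le_tilted_sum (Q n) (hR n) (hR0 n) (c := c) (L n) hθ
      (by exact_mod_cast hn : (0 : ℝ) < n) hδ hδs (hmom n hn)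
    linarith
  have hpos : ∀ᶠ n : ℕ in atTop, 0 < (Q n {x | R n x > θ}).toReal := by
    filter_upwards [lower (s₀ + 1) (D (s₀ + 1) + 1) (by linarith) (by linarith)] with n hn
    have h1 : 0 < Real.exp (n * L n (s₀ + 1)) / 2 := by positivity
    exact pos_of_mul_pos_right (h1.trans_le hn) (by positivity)
  rw [tendsto_order]
  refine ⟨fun a ha => ?_, fun a ha => ?_⟩
  · obtain ⟨s, hs, hsa⟩ : ∃ s, s₀ < s ∧ a < Λ s - s * D s := by
      have hc : ContinuousAt (fun s => Λ s - s * D s) s₀ :=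
        (hΛ s₀ hs₀).continuousAt.sub (continuousAt_id.mul hD)
      rw [← hD₀] at ha
      obtain ⟨s, h1, h2⟩ := (((hc.eventually (lt_mem_nhds ha)).filter_mono
        nhdsWithin_le_nhds).and (eventually_mem_nhdsWithin (s := Ioi s₀))).exists
      exact ⟨s, h2, h1⟩
    have hs' : 0 < s := hs₀.trans hs
    obtain ⟨c, hc, hca⟩ : ∃ c, D s < c ∧ a < Λ s - s * c := by
      refine ⟨D s + (Λ s - s * D s - a) / (2 * s), ?_, ?_⟩
      · have : 0 < (Λ s - s * D s - a) / (2 * s) := div_pos (by linarith) (by linarith)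
        linarith
      · have : s * (D s + (Λ s - s * D s - a) / (2 * s))
            = s * D s + (Λ s - s * D s - a) / 2 := by field_simp
        rw [this]
        linarith
    have hlim : Tendsto (fun n : ℕ => L n s - s * c - (n : ℝ)⁻¹ * Real.log 2) atTop
        (nhds (Λ s - s * c)) := by
      simpa using ((hL s hs').sub_const (s * c)).sub
        ((tendsto_inv_atTop_zero.comp tendsto_natCast_atTop_atTop).mul_const (Real.log 2))
    filter_upwards [lower s c hs hc, hpos, hlim.eventually (lt_mem_nhds hca),
      eventually_ge_atTop 1] with n h1 h2 h3 hn
    have hn0 : (0 : ℝ) < n := by exact_mod_cast hn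
    refine h3.trans_le ?_
    have h4 := Real.log_le_log (by positivity) h1
    rw [Real.log_div (by positivity) (by norm_num), Real.log_exp,
      Real.log_mul (by positivity) h2.ne', Real.log_exp] at h4
    rw [le_inv_mul_iff₀ hn0]
    have : (n : ℝ) * (L n s - s * c - (n : ℝ)⁻¹ * Real.log 2)
        = n * L n s - n * (s * c) - Real.log 2 := by field_simp
    linarith
  · filter_upwards [hpos, ((hL s₀ hs₀).sub_const (s₀ * Real.log θ)).eventually (gt_mem_nhds ha),
      eventually_ge_atTop 1] with n h2 h3 hn
    have hn0 : (0 : ℝ) < n := by exact_mod_cast hn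
    refine lt_of_le_of_lt ?_ h3
    have h4 := Real.log_le_log h2 (toReal_measure_gt_le_exp (Q n) hθ (by positivity)
      (hmom n hn s₀ hs₀) (hR n))
    rw [Real.log_exp] at h4
    rw [inv_mul_le_iff₀ hn0]
    exact h4

end LargeDeviations
section PNorm

variable {p : ℝ} {n : ℕ}

lemma sum_abs_rpow_nonneg (p : ℝ) (x : Fin n → ℝ) : 0 ≤ ∑ i, |x i| ^ p :=
  Finset.sum_nonneg fun _ _ => by positivity

lemma pNorm_nonneg (p : ℝ) (x : Fin n → ℝ) : 0 ≤ pNorm p x :=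
  Real.rpow_nonneg (sum_abs_rpow_nonneg p x) _

lemma measurable_sum_abs_rpow (p : ℝ) : Measurable fun x : Fin n → ℝ => ∑ i, |x i| ^ p :=
  Finset.measurable_fun_sum _ fun i _ =>
    (continuous_abs.comp (continuous_apply i)).measurable.pow_const p

lemma measurable_pNorm (p : ℝ) : Measurable (pNorm p : (Fin n → ℝ) → ℝ) :=
  (measurable_sum_abs_rpow p).pow_const _

lemma pNorm_rpow (hp : 0 < p) (x : Fin n → ℝ) : pNorm p x ^ p = ∑ i, |x i| ^ p := by
  rw [pNorm, ← Real.rpow_mul (sum_abs_rpow_nonneg p x), one_div_mul_cancel hp.ne', Real.rpow_one]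

lemma pNorm_smul (hp : 0 < p) (r : ℝ) (x : Fin n → ℝ) : pNorm p (r • x) = |r| * pNorm p x := by
  have h : ∑ i, |(r • x) i| ^ p = |r| ^ p * ∑ i, |x i| ^ p := by
    simp [abs_mul, Real.mul_rpow, Finset.mul_sum]
  rw [pNorm, h, Real.mul_rpow (by positivity) (sum_abs_rpow_nonneg p x),
    ← Real.rpow_mul (abs_nonneg r), mul_one_div_cancel hp.ne', Real.rpow_one, pNorm]

lemma abs_le_pNorm (hp : 0 < p) (x : Fin n → ℝ) (i : Fin n) : |x i| ≤ pNorm p x := by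
  rw [← Real.rpow_le_rpow_iff (abs_nonneg _) (pNorm_nonneg p x) hp, pNorm_rpow hp]
  exact Finset.single_le_sum (f := fun i => |x i| ^ p) (fun j _ => by positivity)
    (Finset.mem_univ i)

lemma pNorm_zero (hp : 0 < p) : pNorm p (0 : Fin n → ℝ) = 0 := by
  simpa using pNorm_smul hp 0 (0 : Fin n → ℝ)

lemma pNorm_eq_zero_iff (hp : 0 < p) {x : Fin n → ℝ} : pNorm p x = 0 ↔ x = 0 := by
  refine ⟨fun h => funext fun i => ?_, fun h => h ▸ pNorm_zero hp⟩
  have := abs_le_pNorm hp x i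
  rw [h] at this
  simpa using this

lemma pNorm_pos (hp : 0 < p) {x : Fin n → ℝ} (hx : x ≠ 0) : 0 < pNorm p x :=
  (pNorm_nonneg p x).lt_of_ne fun h => hx ((pNorm_eq_zero_iff hp).1 h.symm)

lemma measurableSet_unitBallp (p : ℝ) : MeasurableSet (unitBallp n p) :=
  measurableSet_le (measurable_pNorm p) measurable_const

lemma volume_unitBallp_ne_top (hp : 0 < p) : volume (unitBallp n p) ≠ ⊤ := by
  have hsub : unitBallp n p ⊆ Metric.closedBall 0 1 := by
    intro x hx
    rw [mem_closedBall_zero_iff, pi_norm_le_iff_of_nonneg zero_le_one]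
    exact fun i => (abs_le_pNorm hp x i).trans hx
  exact ((measure_mono hsub).trans_lt measure_closedBall_lt_top).ne

end PNorm

section RatioAGM

variable {p : ℝ} {n : ℕ}

lemma measurable_ratioAGM (p : ℝ) : Measurable (ratioAGM p : (Fin n → ℝ) → ℝ) :=
  ((Finset.measurable_fun_prod _ fun i _ =>
    continuous_abs.measurable.comp (measurable_pi_apply i)).pow_const _).div
    (((measurable_sum_abs_rpow p).const_mul _).pow_const _)

lemma ratioAGM_eq (p : ℝ) (x : Fin n → ℝ) :
    ratioAGM p x = (∏ i, |x i|) ^ ((1 : ℝ) / n) * (n : ℝ) ^ (1 / p) / pNorm p x := by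
  rw [ratioAGM, Real.mul_rpow (by positivity) (sum_abs_rpow_nonneg p x), one_div (n : ℝ),
    Real.inv_rpow (by positivity), pNorm]
  field_simp

lemma ratioAGM_nonneg (p : ℝ) (x : Fin n → ℝ) : 0 ≤ ratioAGM p x := by
  rw [ratioAGM_eq]
  have := pNorm_nonneg p x
  positivity

lemma ratioAGM_zero (hp : 0 < p) : ratioAGM p (0 : Fin n → ℝ) = 0 := by
  rw [ratioAGM_eq, pNorm_zero hp, div_zero]

lemma ratioAGM_smul (hp : 0 < p) (hn : 1 ≤ n) {r : ℝ} (hr : r ≠ 0) (x : Fin n → ℝ) :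
    ratioAGM p (r • x) = ratioAGM p x := by
  have hn0 : (n : ℝ) ≠ 0 := by positivity
  have h : ∏ i, |(r • x) i| = |r| ^ (n : ℝ) * ∏ i, |x i| := by
    simp [abs_mul, Finset.prod_mul_distrib]
  have hr' : 0 < |r| := abs_pos.2 hr
  rw [ratioAGM_eq, ratioAGM_eq, h, pNorm_smul hp, Real.mul_rpow (by positivity)
    (Finset.prod_nonneg fun _ _ => abs_nonneg _), ← Real.rpow_mul hr'.le,
    mul_one_div_cancel hn0, Real.rpow_one, mul_assoc, mul_div_mul_left _ _ hr'.ne']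

lemma ratioAGM_rpow_mul_pNorm_rpow (hp : 0 < p) (hn : 1 ≤ n) {s : ℝ} (hs : 0 ≤ s)
    (x : Fin n → ℝ) :
    ratioAGM p x ^ (n * s) * pNorm p x ^ (n * s)
      = (n : ℝ) ^ (n * s / p) * ∏ i, |x i| ^ s := by
  have hn0 : (n : ℝ) ≠ 0 := by positivity
  rw [← Real.mul_rpow (ratioAGM_nonneg p x) (pNorm_nonneg p x)]
  by_cases hx : x = 0
  · subst hx
    rcases hs.eq_or_lt with rfl | hs
    · simp
    · have : n ≠ 0 := by omega
      simp [ratioAGM_zero hp, Real.zero_rpow hs.ne', Real.zero_rpow (mul_ne_zero hn0 hs.ne'), this]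
  · have hprod : 0 ≤ ∏ i, |x i| := Finset.prod_nonneg fun _ _ => abs_nonneg _
    rw [ratioAGM_eq, div_mul_cancel₀ _ (pNorm_pos hp hx).ne', Real.mul_rpow (by positivity)
      (by positivity), ← Real.rpow_mul hprod, ← Real.rpow_mul (by positivity),
      Real.finsetProd_rpow _ _ fun _ _ => abs_nonneg _, mul_comm]
    congr 2 <;> field_simp

lemma ratioAGM_le (hp : 0 < p) (hn : 1 ≤ n) (x : Fin n → ℝ) :
    ratioAGM p x ≤ (n : ℝ) ^ (1 / p) := by
  by_cases hx : x = 0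
  · rw [hx, ratioAGM_zero hp]
    positivity
  have hn0 : (n : ℝ) ≠ 0 := by positivity
  have hprod : ∏ i, |x i| ≤ pNorm p x ^ (n : ℝ) := by
    simpa using Finset.prod_le_prod (s := Finset.univ) (fun i _ => abs_nonneg (x i))
      (fun i _ => abs_le_pNorm hp x i)
  have h := Real.rpow_le_rpow (Finset.prod_nonneg fun _ _ => abs_nonneg _) hprod
    (by positivity : (0 : ℝ) ≤ 1 / n)
  rw [← Real.rpow_mul (pNorm_nonneg p x), mul_one_div_cancel hn0, Real.rpow_one] at h
  rw [ratioAGM_eq, div_le_iff₀ (pNorm_pos hp hx), mul_comm]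
  exact mul_le_mul_of_nonneg_left h (by positivity)

end RatioAGM
section Radial

variable {p : ℝ} {n : ℕ}

lemma setLIntegral_pNorm_le (hp : 0 < p) (hn : 1 ≤ n) {h : (Fin n → ℝ) → ENNReal}
    (hmeas : Measurable h) (hhom : ∀ r : ℝ, 0 < r → ∀ x, h (r • x) = h x) {r : ℝ} (hr : 0 ≤ r) :
    ∫⁻ x in {x | pNorm p x ≤ r}, h x
      = ENNReal.ofReal (r ^ n) * ∫⁻ x in unitBallp n p, h x := by
  have hms : ∀ r, MeasurableSet {x : Fin n → ℝ | pNorm p x ≤ r} := fun r =>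
    measurableSet_le (measurable_pNorm p) measurable_const
  rcases hr.eq_or_lt with rfl | hr
  · have hset : {x : Fin n → ℝ | pNorm p x ≤ 0} = {0} := by
      ext x
      rw [mem_ofPred_eq, mem_singleton_iff, ← pNorm_eq_zero_iff hp]
      exact ⟨fun h => h.antisymm (pNorm_nonneg p x), le_of_eq⟩
    have : Nonempty (Fin n) := ⟨⟨0, hn⟩⟩
    rw [hset, Measure.restrict_eq_zero.2 (measure_singleton _), zero_pow (by omega)]
    simp
  · have hmap := Measure.map_addHaar_smul (volume : Measure (Fin n → ℝ)) hr.ne'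
    have hscale : ∫⁻ x in unitBallp n p, h x
        = ENNReal.ofReal (r ^ n)⁻¹ * ∫⁻ x in {x | pNorm p x ≤ r}, h x := by
      rw [← lintegral_indicator (measurableSet_unitBallp p),
        ← lintegral_indicator (hms r)]
      have h1 := lintegral_map (μ := volume) (hmeas.indicator (hms r))
        (measurable_const_smul (α := Fin n → ℝ) r)
      rw [hmap, lintegral_smul_measure, Module.finrank_fin_fun, abs_of_pos (by positivity),
        smul_eq_mul] at h1
      rw [h1]
      refine lintegral_congr fun x => ?_
      have hiff : r • x ∈ {x : Fin n → ℝ | pNorm p x ≤ r} ↔ x ∈ unitBallp n p := by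
        rw [mem_ofPred_eq, pNorm_smul hp, abs_of_pos hr, mul_le_iff_le_one_right hr]
        rfl
      by_cases hx : x ∈ unitBallp n p
      · rw [indicator_of_mem hx, indicator_of_mem (hiff.2 hx), hhom r hr]
      · rw [indicator_of_notMem hx, indicator_of_notMem (mt hiff.1 hx)]
    rw [hscale, ← mul_assoc, ← ENNReal.ofReal_mul (by positivity),
      mul_inv_cancel₀ (by positivity), ENNReal.ofReal_one, one_mul]

lemma lintegral_Ioc_mul_pow (hn : 1 ≤ n) {a b : ℝ} (ha : 0 ≤ a) (hab : a ≤ b) :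
    ∫⁻ r in Ioc a b, ENNReal.ofReal (n * r ^ (n - 1)) = ENNReal.ofReal (b ^ n - a ^ n) := by
  obtain ⟨k, rfl⟩ : ∃ k, n = k + 1 := ⟨n - 1, by omega⟩
  have hcont : Continuous fun r : ℝ => ((k + 1 : ℕ) : ℝ) * r ^ (k + 1 - 1) := by fun_prop
  rw [← ofReal_integral_eq_lintegral_ofReal (hcont.integrableOn_Ioc)]
  · rw [← intervalIntegral.integral_of_le hab, intervalIntegral.integral_const_mul]
    simp only [Nat.add_sub_cancel]
    rw [integral_pow]
    push_cast
    congr 1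
    field_simp
  · refine (ae_restrict_iff' measurableSet_Ioc).2 (ae_of_all _ fun r hr => ?_)
    have : 0 ≤ r := ha.trans hr.1.le
    simp only [Pi.zero_apply]
    positivity

/-- Radial part of Lebesgue measure weighted by a function homogeneous of degree `0`. -/
lemma map_pNorm_withDensity (hp : 0 < p) (hn : 1 ≤ n) {h : (Fin n → ℝ) → ENNReal}
    (hmeas : Measurable h) (hhom : ∀ r : ℝ, 0 < r → ∀ x, h (r • x) = h x)
    (hfin : ∫⁻ x in unitBallp n p, h x ≠ ⊤) :
    Measure.map (pNorm p) (volume.withDensity h)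
      = (∫⁻ x in unitBallp n p, h x) •
        (volume.restrict (Ioi 0)).withDensity fun r : ℝ => ENNReal.ofReal (n * r ^ (n - 1)) := by
  have hball : ∀ r, 0 ≤ r → (volume.withDensity h) {x | pNorm p x ≤ r}
      = ENNReal.ofReal (r ^ n) * ∫⁻ x in unitBallp n p, h x := fun r hr => by
    rw [withDensity_apply _ (measurableSet_le (measurable_pNorm p) measurable_const),
      setLIntegral_pNorm_le hp hn hmeas hhom hr]
  have hballfin : ∀ r, 0 ≤ r → (volume.withDensity h) {x | pNorm p x ≤ r} ≠ ⊤ := fun r hr => by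
    rw [hball r hr]
    exact ENNReal.mul_ne_top ENNReal.ofReal_ne_top hfin
  have hshell : ∀ a b : ℝ, a < b → Measure.map (pNorm p) (volume.withDensity h) (Ioc a b)
      = ENNReal.ofReal (max b 0 ^ n - max a 0 ^ n) * ∫⁻ x in unitBallp n p, h x := by
    intro a b hab
    have hle : max a 0 ≤ max b 0 := max_le_max_right 0 hab.le
    rw [Measure.map_apply (measurable_pNorm p) measurableSet_Ioc,
      ENNReal.ofReal_sub _ (by positivity), ENNReal.sub_mul (fun _ _ => hfin),
      ← hball _ (le_max_right b 0), ← hball _ (le_max_right a 0),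
      ← measure_sdiff (s₁ := {x | pNorm p x ≤ max b 0}) (s₂ := {x | pNorm p x ≤ max a 0})
        (fun x hx => le_trans hx hle)
        (measurableSet_le (measurable_pNorm p) measurable_const).nullMeasurableSet
        (hballfin _ (le_max_right a 0))]
    have hzero : (volume.withDensity h) {x | pNorm p x ≤ 0} = 0 := by
      rw [hball 0 le_rfl, zero_pow (by omega)]
      simp
    refine measure_congr ?_
    have hae : ∀ᵐ x ∂(volume.withDensity h), ¬ pNorm p x ≤ 0 := by
      rw [ae_iff]
      simpa using hzero
    filter_upwards [hae] with x hx
    rw [not_le] at hx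
    refine propext ?_
    change (a < pNorm p x ∧ pNorm p x ≤ b) ↔ (pNorm p x ≤ max b 0 ∧ ¬ pNorm p x ≤ max a 0)
    simp [hx.not_ge, and_comm]
  refine Measure.ext_of_Ioc' _ _ (fun a b hab => ?_) fun a b hab => ?_
  · rw [hshell a b hab]
    exact ENNReal.mul_ne_top ENNReal.ofReal_ne_top hfin
  · rw [hshell a b hab, Measure.smul_apply, smul_eq_mul, withDensity_apply _ measurableSet_Ioc,
      Measure.restrict_restrict measurableSet_Ioc, mul_comm]
    have hset : Ioc a b ∩ Ioi 0 = Ioc (max a 0) (max b 0) := by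
      ext r
      simp only [mem_inter_iff, mem_Ioc, mem_Ioi, max_lt_iff, le_max_iff]
      constructor
      · rintro ⟨⟨h1, h2⟩, h3⟩
        exact ⟨⟨h1, h3⟩, Or.inl h2⟩
      · rintro ⟨⟨h1, h3⟩, h2⟩
        exact ⟨⟨h1, h2.resolve_right h3.not_ge⟩, h3⟩
    rw [hset, lintegral_Ioc_mul_pow hn (le_max_right a 0) (max_le_max_right 0 hab.le)]

lemma lintegral_mul_comp_pNorm (hp : 0 < p) (hn : 1 ≤ n) {h : (Fin n → ℝ) → ENNReal}
    (hmeas : Measurable h) (hhom : ∀ r : ℝ, 0 < r → ∀ x, h (r • x) = h x)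
    (hfin : ∫⁻ x in unitBallp n p, h x ≠ ⊤) {φ : ℝ → ENNReal} (hφ : Measurable φ) :
    ∫⁻ x, h x * φ (pNorm p x)
      = (∫⁻ x in unitBallp n p, h x) *
        ∫⁻ r in Ioi (0 : ℝ), ENNReal.ofReal (n * r ^ (n - 1)) * φ r := by
  have h1 := lintegral_map (μ := volume.withDensity h) hφ (measurable_pNorm (n := n) p)
  rw [map_pNorm_withDensity hp hn hmeas hhom hfin, lintegral_smul_measure,
    lintegral_withDensity_eq_lintegral_mul _ (by fun_prop) hφ,
    lintegral_withDensity_eq_lintegral_mul (g := fun x => φ (pNorm p x)) _ hmeas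
      (hφ.comp (measurable_pNorm p))] at h1
  exact h1.symm

end Radial

section Moments

variable {p : ℝ} {n : ℕ}

lemma lintegral_prod_abs_rpow_mul_exp (hp : 0 < p) {s : ℝ} (hs : 0 ≤ s) :
    ∫⁻ x : Fin n → ℝ, ENNReal.ofReal (∏ i, |x i| ^ s * Real.exp (-|x i| ^ p))
      = ENNReal.ofReal ((2 / p * Real.Gamma ((s + 1) / p)) ^ n) := by
  have hval : ∫ x : Fin n → ℝ, ∏ i, |x i| ^ s * Real.exp (-|x i| ^ p)
      = (2 / p * Real.Gamma ((s + 1) / p)) ^ n := by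
    rw [integral_fintype_prod_volume_eq_pow fun x : ℝ => |x| ^ s * Real.exp (-|x| ^ p),
      integral_comp_abs (f := fun x => x ^ s * Real.exp (-x ^ p)),
      integral_rpow_mul_exp_neg_rpow hp (by linarith), Fintype.card_fin]
    ring
  have hΓ : 0 < Real.Gamma ((s + 1) / p) := Real.Gamma_pos_of_pos (by positivity)
  rw [← hval, ofReal_integral_eq_lintegral_ofReal]
  · refine not_imp_comm.1 integral_undef ?_
    rw [hval]
    positivity
  · exact ae_of_all _ fun x => Finset.prod_nonneg fun i _ => by positivity

lemma lintegral_Ioi_radial (hp : 0 < p) (hn : 1 ≤ n) {s : ℝ} (hs : 0 ≤ s) :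
    ∫⁻ r in Ioi (0 : ℝ), ENNReal.ofReal (n * r ^ (n - 1)) *
        ENNReal.ofReal (r ^ (n * s) * Real.exp (-r ^ p))
      = ENNReal.ofReal (n / p * Real.Gamma (n * (s + 1) / p)) := by
  have hn0 : (0 : ℝ) < n := by exact_mod_cast hn
  have hΓ : 0 < Real.Gamma (n * (s + 1) / p) := Real.Gamma_pos_of_pos (by positivity)
  have hval : ∫ r in Ioi (0 : ℝ), n * (r ^ (n * s + n - 1 : ℝ) * Real.exp (-r ^ p))
      = n / p * Real.Gamma (n * (s + 1) / p) := by
    rw [integral_const_mul, integral_rpow_mul_exp_neg_rpow hp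
      (by linarith [mul_nonneg hn0.le hs])]
    ring_nf
  rw [← hval, ofReal_integral_eq_lintegral_ofReal]
  · refine setLIntegral_congr_fun measurableSet_Ioi fun r hr => ?_
    have hr : 0 < r := hr
    rw [← ENNReal.ofReal_mul (by positivity)]
    have : r ^ (n * s + n - 1 : ℝ) = r ^ (n - 1) * r ^ (n * s : ℝ) := by
      rw [← Real.rpow_natCast, ← Real.rpow_add hr, Nat.cast_sub hn]
      push_cast
      ring_nf
    rw [this]
    ring_nf
  · refine not_imp_comm.1 integral_undef ?_
    rw [hval]
    positivity
  · refine (ae_restrict_iff' measurableSet_Ioi).2 (ae_of_all _ fun r hr => ?_)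
    have hr : 0 < r := hr
    simp only [Pi.zero_apply]
    positivity

/-- The power moments of `ratioAGM` over the unit ball. -/
lemma setLIntegral_ratioAGM_rpow (hp : 0 < p) (hn : 1 ≤ n) {s : ℝ} (hs : 0 ≤ s) :
    ∫⁻ x in unitBallp n p, ENNReal.ofReal (ratioAGM p x ^ (n * s))
      = ENNReal.ofReal ((n : ℝ) ^ (n * s / p) * (2 / p * Real.Gamma ((s + 1) / p)) ^ n
          / (n / p * Real.Gamma (n * (s + 1) / p))) := by
  have hn0 : (0 : ℝ) < n := by exact_mod_cast hn
  have hΓ : 0 < Real.Gamma (n * (s + 1) / p) := Real.Gamma_pos_of_pos (by positivity)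
  have hfin : ∫⁻ x in unitBallp n p, ENNReal.ofReal (ratioAGM p x ^ (n * s)) ≠ ⊤ := by
    refine ((lintegral_mono fun x => ENNReal.ofReal_le_ofReal (Real.rpow_le_rpow
      (ratioAGM_nonneg p x) (ratioAGM_le hp hn x) (by positivity))).trans_lt ?_).ne
    rw [setLIntegral_const]
    exact (ENNReal.mul_ne_top ENNReal.ofReal_ne_top (volume_unitBallp_ne_top hp)).lt_top
  have key := lintegral_mul_comp_pNorm hp hn
    (h := fun x => ENNReal.ofReal (ratioAGM p x ^ (n * s)))
    ((measurable_ratioAGM p).pow_const _).ennreal_ofReal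
    (fun r hr x => by rw [ratioAGM_smul hp hn hr.ne']) hfin
    (φ := fun r => ENNReal.ofReal (r ^ (n * s) * Real.exp (-r ^ p))) (by fun_prop)
  rw [lintegral_Ioi_radial hp hn hs] at key
  have hleft : ∫⁻ x : Fin n → ℝ, ENNReal.ofReal (ratioAGM p x ^ (n * s)) *
      ENNReal.ofReal (pNorm p x ^ (n * s) * Real.exp (-pNorm p x ^ p))
      = ENNReal.ofReal ((n : ℝ) ^ (n * s / p) * (2 / p * Real.Gamma ((s + 1) / p)) ^ n) := by
    rw [ENNReal.ofReal_mul (by positivity), ← lintegral_prod_abs_rpow_mul_exp hp hs,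
      ← lintegral_ofReal_const_mul _ (by positivity)]
    refine lintegral_congr fun x => ?_
    rw [← ENNReal.ofReal_mul (Real.rpow_nonneg (ratioAGM_nonneg p x) _), ← mul_assoc,
      ratioAGM_rpow_mul_pNorm_rpow hp hn hs, pNorm_rpow hp, Finset.prod_mul_distrib,
      ← Real.exp_sum, Finset.sum_neg_distrib, mul_assoc]
  rw [hleft] at key
  rw [ENNReal.ofReal_div_of_pos (by positivity), key, ENNReal.mul_div_cancel_right]
  · simpa using by positivity
  · exact ENNReal.ofReal_ne_top

end Moments
section ConeMeasure

variable {p : ℝ} {n : ℕ}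

lemma coneOf_sphere_ratioAGM_diff_zero (hp : 0 < p) (hn : 1 ≤ n) {θ : ℝ} (hθ : 0 < θ) :
    coneOf (unitSpherep n p ∩ {x | ratioAGM p x > θ}) \ {0}
      = {x | ratioAGM p x > θ} ∩ unitBallp n p := by
  ext y
  constructor
  · rintro ⟨⟨r, hr, x, ⟨hx1, hx2⟩, rfl⟩, hy⟩
    have hr0 : r ≠ 0 := by
      rintro rfl
      simp at hy
    have hx1 : pNorm p x = 1 := hx1
    refine ⟨?_, ?_⟩
    · change ratioAGM p (r • x) > θ
      rw [ratioAGM_smul hp hn hr0]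
      exact hx2
    · change pNorm p (r • x) ≤ 1
      rw [pNorm_smul hp, hx1, abs_of_nonneg hr.1, mul_one]
      exact hr.2
  · rintro ⟨hy1, hy2⟩
    have hy1 : ratioAGM p y > θ := hy1
    have hy0 : y ≠ 0 := by
      rintro rfl
      rw [ratioAGM_zero hp] at hy1
      exact hθ.not_gt hy1
    have hpos := pNorm_pos hp hy0
    refine ⟨⟨pNorm p y, ⟨hpos.le, hy2⟩, (pNorm p y)⁻¹ • y, ⟨?_, ?_⟩, ?_⟩, hy0⟩
    · change pNorm p _ = 1
      rw [pNorm_smul hp, abs_of_pos (inv_pos.2 hpos), inv_mul_cancel₀ hpos.ne']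
    · change ratioAGM p _ > θ
      rw [ratioAGM_smul hp hn (inv_ne_zero hpos.ne')]
      exact hy1
    · rw [smul_inv_smul₀ hpos.ne']

lemma IsConeMeasure.measure_ratioAGM_gt {C : Measure (Fin n → ℝ)} (hC : IsConeMeasure n p C)
    (hp : 0 < p) (hn : 1 ≤ n) {θ : ℝ} (hθ : 0 < θ) :
    C {x | ratioAGM p x > θ}
      = volume ({x | ratioAGM p x > θ} ∩ unitBallp n p) / volume (unitBallp n p) := by
  obtain ⟨_, hsphere, hcone⟩ := hC
  have hms : MeasurableSet {x : Fin n → ℝ | ratioAGM p x > θ} :=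
    measurableSet_lt measurable_const (measurable_ratioAGM p)
  have hS : MeasurableSet (unitSpherep n p) :=
    measurable_pNorm p (measurableSet_singleton 1)
  have : Nonempty (Fin n) := ⟨⟨0, hn⟩⟩
  have hout : C ({x | ratioAGM p x > θ} \ unitSpherep n p) = 0 :=
    measure_mono_null (fun x hx => hx.2) hsphere
  rw [← measure_inter_add_sdiff _ hS, hout, add_zero, inter_comm,
    hcone _ (hS.inter hms) inter_subset_left,
    ← coneOf_sphere_ratioAGM_diff_zero hp hn hθ, measure_sdiff_null (measure_singleton 0)]

lemma HasConeDirDist.measure_ratioAGM_gt {Ω : Type*} [MeasurableSpace Ω] {P : Measure Ω}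
    {X : Ω → Fin n → ℝ} (hX : HasConeDirDist n p P X)
    (hp : 0 < p) (hn : 1 ≤ n) {θ : ℝ} (hθ : 0 < θ) :
    P {ω | ratioAGM p (X ω) > θ}
      = volume ({x | ratioAGM p x > θ} ∩ unitBallp n p) / volume (unitBallp n p) := by
  obtain ⟨μR, C, hμR, -, hzero, hC, hmap⟩ := hX
  have hCprob : IsProbabilityMeasure C := hC.1
  have hsmul : Measurable fun rz : ℝ × (Fin n → ℝ) => rz.1 • rz.2 :=
    measurable_fst.smul measurable_snd
  have hms : MeasurableSet {x : Fin n → ℝ | ratioAGM p x > θ} :=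
    measurableSet_lt measurable_const (measurable_ratioAGM p)
  have hXm : AEMeasurable X P := by
    refine AEMeasurable.of_map_ne_zero ?_
    rw [hmap]
    have := Measure.isProbabilityMeasure_map (μ := μR.prod C) hsmul.aemeasurable
    exact IsProbabilityMeasure.ne_zero _
  have h1 : P {ω | ratioAGM p (X ω) > θ} = Measure.map X P {x | ratioAGM p x > θ} :=
    (Measure.map_apply_of_aemeasurable hXm hms).symm
  rw [h1, hmap, Measure.map_apply hsmul hms, Measure.prod_apply (hsmul hms),
    ← hC.measure_ratioAGM_gt hp hn hθ]
  have hae : ∀ᵐ r ∂μR, C (Prod.mk r ⁻¹' ((fun rz : ℝ × (Fin n → ℝ) => rz.1 • rz.2) ⁻¹'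
      {x | ratioAGM p x > θ})) = C {x | ratioAGM p x > θ} := by
    have hne : ∀ᵐ r ∂μR, r ≠ 0 := by
      rw [ae_iff]
      simpa using hzero
    filter_upwards [hne] with r hr
    congr 1
    ext x
    change ratioAGM p (r • x) > θ ↔ ratioAGM p x > θ
    rw [ratioAGM_smul hp hn hr]
  rw [lintegral_congr_ae hae, lintegral_const, measure_univ, mul_one]

end ConeMeasure

section UniformBall

variable {p : ℝ} {n : ℕ}

/-- The uniform distribution on the unit ball `B_p^n`. -/
def uniformBall (n : ℕ) (p : ℝ) : Measure (Fin n → ℝ) :=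
  (volume (unitBallp n p))⁻¹ • volume.restrict (unitBallp n p)

/-- The scaled logarithmic moment generating function of `log R_n` under the cone measure. -/
def logMoment (p : ℝ) (n : ℕ) (s : ℝ) : ℝ :=
  stirlingDefect (1 / p) - stirlingDefect ((s + 1) / p)
    + (stirlingDefect (n * (s + 1) / p) - stirlingDefect (n / p)) / n

lemma volume_unitBallp_eq (hp : 0 < p) (hn : 1 ≤ n) :
    volume (unitBallp n p) = ENNReal.ofReal
      ((2 / p * Real.Gamma (1 / p)) ^ n / (n / p * Real.Gamma (n / p))) := by
  simpa using setLIntegral_ratioAGM_rpow (s := 0) hp hn le_rfl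

lemma volume_unitBallp_ne_zero (hp : 0 < p) (hn : 1 ≤ n) : volume (unitBallp n p) ≠ 0 := by
  have hn0 : (0 : ℝ) < n := by exact_mod_cast hn
  have h1 : 0 < Real.Gamma (n / p) := Real.Gamma_pos_of_pos (by positivity)
  have h2 : 0 < Real.Gamma (1 / p) := Real.Gamma_pos_of_pos (by positivity)
  rw [volume_unitBallp_eq hp hn, Ne, ENNReal.ofReal_eq_zero, not_le]
  positivity

lemma isProbabilityMeasure_uniformBall (hp : 0 < p) (hn : 1 ≤ n) :
    IsProbabilityMeasure (uniformBall n p) := by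
  refine ⟨?_⟩
  rw [uniformBall, Measure.smul_apply, Measure.restrict_apply_univ, smul_eq_mul]
  exact ENNReal.inv_mul_cancel (volume_unitBallp_ne_zero hp hn) (volume_unitBallp_ne_top hp)

lemma exp_logMoment (hp : 0 < p) (hn : 1 ≤ n) {s : ℝ} (hs : 0 ≤ s) :
    (n : ℝ) ^ (n * s / p) * (2 / p * Real.Gamma ((s + 1) / p)) ^ n
        / (n / p * Real.Gamma (n * (s + 1) / p))
      / ((2 / p * Real.Gamma (1 / p)) ^ n / (n / p * Real.Gamma (n / p)))
      = Real.exp (n * logMoment p n s) := by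
  have hn0 : (0 : ℝ) < n := by exact_mod_cast hn
  have h1 : 0 < Real.Gamma (n / p) := Real.Gamma_pos_of_pos (by positivity)
  have h2 : 0 < Real.Gamma (1 / p) := Real.Gamma_pos_of_pos (by positivity)
  have h3 : 0 < Real.Gamma ((s + 1) / p) := Real.Gamma_pos_of_pos (by positivity)
  have h4 : 0 < Real.Gamma (n * (s + 1) / p) := Real.Gamma_pos_of_pos (by positivity)
  have hs1 : 0 < s + 1 := by linarith
  rw [← Real.exp_log (show 0 < (n : ℝ) ^ (n * s / p) * (2 / p * Real.Gamma ((s + 1) / p)) ^ n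
        / (n / p * Real.Gamma (n * (s + 1) / p))
      / ((2 / p * Real.Gamma (1 / p)) ^ n / (n / p * Real.Gamma (n / p))) by positivity)]
  congr 1
  rw [Real.log_div (by positivity) (by positivity), Real.log_div (by positivity) (by positivity),
    Real.log_div (by positivity) (by positivity), Real.log_mul (by positivity) (by positivity),
    Real.log_rpow hn0, Real.log_pow, Real.log_pow, Real.log_mul (by positivity) h3.ne',
    Real.log_mul (by positivity) h2.ne', Real.log_mul (by positivity) h4.ne',
    Real.log_mul (by positivity) h1.ne']
  unfold logMoment stirlingDefect
  rw [Real.log_div (x := n * (s + 1)) (by positivity) hp.ne', Real.log_mul hn0.ne' hs1.ne',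
    Real.log_div (x := (n : ℝ)) (by positivity) hp.ne', Real.log_div hs1.ne' hp.ne',
    Real.log_div one_ne_zero hp.ne', Real.log_one]
  field_simp
  ring

lemma lintegral_ratioAGM_uniformBall (hp : 0 < p) (hn : 1 ≤ n) {s : ℝ} (hs : 0 ≤ s) :
    ∫⁻ x, ENNReal.ofReal (ratioAGM p x ^ (n * s)) ∂(uniformBall n p)
      = ENNReal.ofReal (Real.exp (n * logMoment p n s)) := by
  have hn0 : (0 : ℝ) < n := by exact_mod_cast hn
  have h1 : 0 < Real.Gamma (n / p) := Real.Gamma_pos_of_pos (by positivity)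
  have h2 : 0 < Real.Gamma (1 / p) := Real.Gamma_pos_of_pos (by positivity)
  rw [uniformBall, lintegral_smul_measure, setLIntegral_ratioAGM_rpow hp hn hs,
    volume_unitBallp_eq hp hn, smul_eq_mul, mul_comm, ← div_eq_mul_inv,
    ← ENNReal.ofReal_div_of_pos (by positivity), exp_logMoment hp hn hs]

lemma tendsto_logMoment (hp : 0 < p) {s : ℝ} (hs : 0 ≤ s) :
    Tendsto (fun n => logMoment p n s) atTop
      (nhds (stirlingDefect (1 / p) - stirlingDefect ((s + 1) / p))) := by
  have hlim : ∀ c : ℝ, 0 < c →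
      Tendsto (fun n : ℕ => stirlingDefect (n * c) / n) atTop (nhds 0) := by
    intro c hc
    have h := (tendsto_stirlingDefect_div_atTop.comp
      (tendsto_natCast_atTop_atTop.atTop_mul_const hc)).mul_const c
    rw [zero_mul] at h
    refine h.congr fun n => ?_
    simp only [Function.comp_apply]
    rw [div_mul_eq_mul_div, mul_div_mul_right _ _ hc.ne']
  have h := ((hlim ((s + 1) / p) (by positivity)).sub (hlim (1 / p) (by positivity))).const_add
    (stirlingDefect (1 / p) - stirlingDefect ((s + 1) / p))
  rw [sub_zero, add_zero] at h
  refine h.congr fun n => ?_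
  rw [logMoment, ← sub_div, mul_div_assoc, mul_one_div]

end UniformBall

/-- for `θ ∈ (e^{m_p}, 1)`, `lim_n (1/n) log P(R_n > θ) = -I_p(θ)`. -/
theorem statement5 (p : ℝ) (hp : 1 ≤ p)
    (Ω : ℕ → Type) [∀ n, MeasurableSpace (Ω n)]
    (P : ∀ n, Measure (Ω n)) [∀ n, IsProbabilityMeasure (P n)]
    (X : ∀ n, Ω n → Fin n → ℝ)
    (hX : ∀ n, 1 ≤ n → HasConeDirDist n p (P n) (X n))
    (θ : ℝ) (hθ : θ ∈ Ioo (Real.exp (mConst p)) 1) :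
    Tendsto
      (fun n : ℕ => (n : ℝ)⁻¹ *
        Real.log (((P n) {ω | ratioAGM p (X n ω) > θ}).toReal))
      atTop (nhds (-(ratefn p θ))) := by
  have hp0 : 0 < p := by linarith
  obtain ⟨hθ1, hθ2⟩ := hθ
  have hθ0 : 0 < θ := (Real.exp_pos _).trans hθ1
  have hlogθ : Real.log θ < 0 := Real.log_neg hθ0 hθ2
  have hHa : Hfun (1 / p) < p * Real.log θ := by
    have h1 : mConst p < Real.log θ := (Real.lt_log_iff_exp_lt hθ0).2 hθ1
    have h2 : Hfun (1 / p) = p * mConst p := by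
      rw [Hfun, mConst, Real.log_div one_ne_zero hp0.ne', Real.log_one]
      field_simp
      ring
    rw [h2]
    exact mul_lt_mul_of_pos_left h1 hp0
  obtain ⟨hG, hHG⟩ : 1 / p < Gfun p θ ∧ Hfun (Gfun p θ) = p * Real.log θ :=
    Hinv_spec (by positivity) hHa (mul_neg_of_pos_of_neg hp0 hlogθ)
  have hG0 : 0 < Gfun p θ := lt_trans (by positivity) hG
  have hs₀ : 0 < p * Gfun p θ - 1 := by
    rw [div_lt_iff₀ hp0] at hG
    linarith
  have harg : (p * Gfun p θ - 1 + 1) / p = Gfun p θ := by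
    field_simp
    ring
  have main := tendsto_log_tail_of_moments (fun n => uniformBall n p)
    (fun n => (ratioAGM p : (Fin n → ℝ) → ℝ)) (logMoment p)
    (Λ := fun s => stirlingDefect (1 / p) - stirlingDefect ((s + 1) / p))
    (D := fun s => Hfun ((s + 1) / p) / p) (θ := θ) (s₀ := p * Gfun p θ - 1)
    (fun n hn => isProbabilityMeasure_uniformBall hp0 hn) (fun n => measurable_ratioAGM p)
    (fun n x => ratioAGM_nonneg p x)
    (fun n hn s hs => lintegral_ratioAGM_uniformBall hp0 hn hs.le)
    (fun s hs => tendsto_logMoment hp0 hs.le)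
    (fun s hs => by
      have h1 : HasDerivAt (fun s : ℝ => (s + 1) / p) (1 / p) s :=
        ((hasDerivAt_id s).add_const 1).div_const p
      have h2 := ((hasDerivAt_stirlingDefect (by positivity : 0 < (s + 1) / p)).comp s
        h1).const_sub (stirlingDefect (1 / p))
      refine h2.congr_deriv ?_
      ring)
    hs₀
    (by
      refine ContinuousAt.div_const ?_ p
      have h1 : ContinuousAt Hfun ((p * Gfun p θ - 1 + 1) / p) := by
        rw [harg]
        exact continuousOn_Hfun.continuousAt (Ioi_mem_nhds hG0)
      exact ContinuousAt.comp (f := fun s : ℝ => (s + 1) / p) h1 (by fun_prop))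
    (by
      rw [harg, hHG]
      field_simp)
    (fun s hs => by
      refine div_lt_div_of_pos_right (Hfun_strictMonoOn ?_ ?_ ?_) hp0
      · rw [harg]
        exact hG0
      · have : 0 < s := hs₀.trans hs
        exact (by positivity : 0 < (s + 1) / p)
      · exact div_lt_div_of_pos_right (by linarith) hp0)
    hθ0
  have hlim : stirlingDefect (1 / p) - stirlingDefect ((p * Gfun p θ - 1 + 1) / p)
      - (p * Gfun p θ - 1) * Real.log θ = -ratefn p θ := by
    rw [harg, ratefn, stirlingDefect, stirlingDefect, Real.log_div one_ne_zero hp0.ne',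
      Real.log_one]
    ring
  rw [hlim] at main
  refine main.congr' ?_
  filter_upwards [eventually_ge_atTop 1] with n hn
  rw [(hX n hn).measure_ratioAGM_gt hp0 hn hθ0, uniformBall, Measure.smul_apply,
    Measure.restrict_apply (measurableSet_lt measurable_const (measurable_ratioAGM p)),
    smul_eq_mul, mul_comm (volume (unitBallp n p))⁻¹, div_eq_mul_inv]
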